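/- For λ > −1, t ∈ ℝ and integer m ≥ 2, let x_{ℓ,n}^{λ} denote the ℓ-th largest positive zero of the monic generalised higher order Freud polynomial P_n(x;λ). Then for every n ≥ 2, every ℓ ∈ {1, …, n−1} and every k ∈ (0,1]: (i) x_{ℓ+1,2n}^{λ} < x_{ℓ,2n−1}^{λ} < x_{ℓ,2n−1}^{λ+k} < x_{ℓ,2n−1}^{λ+1} < x_{ℓ,2n}^{λ}, and (ii) x_{ℓ+1,2n+1}^{λ} < x_{ℓ,2n}^{λ} < x_{ℓ,2n}^{λ+k} < x_{ℓ,2n}^{λ+1} = x_{ℓ,2n+1}^{λ} (with strict inequalities for k in the open interval (0,1)). -/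

import Mathlib

open MeasureTheory Real Polynomial

/-- The generalised higher order Freud weight `ω(x;t,λ) = |x|^{2λ+1} exp(t x² − x^{2m})`. -/
noncomputable def freudWeight (m : ℕ) (lam t x : ℝ) : ℝ :=
  |x| ^ (2 * lam + 1) * Real.exp (t * x ^ 2 - x ^ (2 * m))

/-- `z` is the `ℓ`-th largest positive zero of the polynomial `p`: it is a positive root of `p`
and exactly `ℓ − 1` distinct roots of `p` exceed it. -/
def IsNthLargestPosZero (p : Polynomial ℝ) (ℓ : ℕ) (z : ℝ) : Prop :=
  0 < z ∧ p.IsRoot z ∧ (p.roots.toFinset.filter (fun y => z < y)).card = ℓ - 1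

lemma deg_lt_of_natDeg_lt {g : ℝ[X]} {n : ℕ} (h : g.natDegree < n) : g.degree < n :=
  degree_le_natDegree.trans_lt (by exact_mod_cast h)

/-- Strict positivity of a linear functional on polynomials that are nonnegative on `(0,∞)`. -/
def FPos (L : ℝ[X] →ₗ[ℝ] ℝ) : Prop :=
  ∀ f : ℝ[X], f ≠ 0 → (∀ y, 0 < y → 0 ≤ f.eval y) → 0 < L f

/-- `Q` is the monic orthogonal polynomial of degree `n` for `L`. -/
def FOrth (L : ℝ[X] →ₗ[ℝ] ℝ) (n : ℕ) (Q : ℝ[X]) : Prop :=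
  Q.Monic ∧ Q.natDegree = n ∧ ∀ g : ℝ[X], g.degree < n → L (Q * g) = 0

lemma FOrth.unique {L : ℝ[X] →ₗ[ℝ] ℝ} (hL : ∀ f, f ≠ 0 → L (f * f) ≠ 0) {n : ℕ} {Q R : ℝ[X]}
    (hQ : FOrth L n Q) (hR : FOrth L n R) : Q = R := by
  by_contra hne
  have hd : (Q - R).degree < n := by
    have h1 : Q.degree = n := by rw [degree_eq_natDegree hQ.1.ne_zero, hQ.2.1]
    have h2 : R.degree = n := by rw [degree_eq_natDegree hR.1.ne_zero, hR.2.1]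
    have := degree_sub_lt_left (h1.trans h2.symm) hQ.1.ne_zero
      (by rw [hQ.1.leadingCoeff, hR.1.leadingCoeff])
    rwa [h1] at this
  apply hL (Q - R) (sub_ne_zero.mpr hne)
  have : (Q - R) * (Q - R) = Q * (Q - R) - R * (Q - R) := by ring
  rw [this, map_sub, hQ.2.2 _ hd, hR.2.2 _ hd, sub_zero]

lemma FOrth.no_factor {L : ℝ[X] →ₗ[ℝ] ℝ} (hL : FPos L) {n : ℕ} {Q q g : ℝ[X]}
    (hQ : FOrth L n Q) (h : Q = q * g) (hq : ∀ y, 0 < y → 0 ≤ q.eval y)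
    (hg : g.natDegree < n) : False := by
  have hne := hQ.1.ne_zero
  rw [h] at hne
  have h1 := hQ.2.2 g (deg_lt_of_natDeg_lt hg)
  have h2 : 0 < L (q * g * g) := by
    apply hL
    · exact mul_ne_zero hne (right_ne_zero_of_mul hne)
    · intro y hy
      rw [eval_mul, eval_mul, mul_assoc]
      exact mul_nonneg (hq y hy) (mul_self_nonneg _)
  rw [h] at h1
  exact h2.ne' h1

lemma noroot_sign {q : ℝ[X]} (h : ∀ y, q.eval y ≠ 0) :
    (∀ y, 0 ≤ q.eval y) ∨ (∀ y, 0 ≤ (-q).eval y) := by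
  by_contra hcon
  push Not at hcon
  obtain ⟨⟨a, ha⟩, ⟨b, hb⟩⟩ := hcon
  rw [eval_neg] at hb
  have := mem_range_of_exists_le_of_exists_ge q.continuous ⟨a, ha.le⟩ ⟨b, by linarith⟩
  obtain ⟨c, hc⟩ := this
  exact h c hc

lemma FOrth.pos_root {L : ℝ[X] →ₗ[ℝ] ℝ} (hL : FPos L) {n : ℕ} {Q : ℝ[X]}
    (hQ : FOrth L n Q) {a : ℝ} (ha : Q.IsRoot a) : 0 < a := by
  by_contra hcon
  push Not at hcon
  obtain ⟨g, hg⟩ := dvd_iff_isRoot.mpr ha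
  have hgm : g.Monic := (monic_X_sub_C a).of_mul_monic_left (hg ▸ hQ.1)
  refine hQ.no_factor hL hg (fun y hy => ?_) ?_
  · simp; linarith
  · have := (monic_X_sub_C a).natDegree_mul hgm
    rw [← hg, hQ.2.1, natDegree_X_sub_C] at this
    omega

lemma FOrth.card_roots {L : ℝ[X] →ₗ[ℝ] ℝ} (hL : FPos L) {n : ℕ} {Q : ℝ[X]}
    (hQ : FOrth L n Q) : Q.roots.toFinset.card = n := by
  have hnd : Q.roots.Nodup := by
    rw [Multiset.nodup_iff_count_le_one]
    intro a
    by_contra hcon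
    push Not at hcon
    rw [count_roots] at hcon
    have h2 : (X - C a) ^ 2 ∣ Q := (le_rootMultiplicity_iff hQ.1.ne_zero).1 hcon
    obtain ⟨g, hg⟩ := h2
    have hm : ((X - C a) ^ 2).Monic := (monic_X_sub_C a).pow 2
    have hgm : g.Monic := hm.of_mul_monic_left (hg ▸ hQ.1)
    refine hQ.no_factor hL hg (fun y hy => ?_) ?_
    · simp; positivity
    · have := hm.natDegree_mul hgm
      rw [← hg, hQ.2.1, (monic_X_sub_C a).natDegree_pow, natDegree_X_sub_C] at this
      omega
  rw [Multiset.toFinset_card_of_nodup hnd]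
  obtain ⟨q, h1, h2, h3⟩ := exists_prod_multiset_X_sub_C_mul Q
  by_contra hcon
  rw [hQ.2.1] at h2
  have hq0 : q ≠ 0 := by
    rintro rfl
    rw [mul_zero] at h1
    exact hQ.1.ne_zero h1.symm
  have hnr : ∀ y, q.eval y ≠ 0 := by
    intro y hy
    have : y ∈ q.roots := (mem_roots hq0).2 hy
    rw [h3] at this
    simp at this
  have hdeg : (Q.roots.map fun a => X - C a).prod.natDegree < n := by
    rw [natDegree_multiset_prod_X_sub_C_eq_card]; omega
  rcases noroot_sign hnr with h | h
  · exact hQ.no_factor hL (q := q) (by rw [mul_comm, h1]) (fun y _ => h y) hdeg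
  · exact hQ.no_factor hL (q := -q) (g := -(Q.roots.map fun a => X - C a).prod)
      (by rw [neg_mul_neg, mul_comm, h1]) (fun y _ => h y) (by rwa [natDegree_neg])

lemma FOrth.gauss {L : ℝ[X] →ₗ[ℝ] ℝ} (hL : FPos L) {n : ℕ} {Q : ℝ[X]}
    (hQ : FOrth L n Q) : ∃ W : ℝ → ℝ, (∀ s ∈ Q.roots.toFinset, 0 < W s) ∧
      ∀ f : ℝ[X], f.natDegree < 2 * n → L f = ∑ s ∈ Q.roots.toFinset, W s * f.eval s := by
  have hcard := hQ.card_roots hL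
  set S := Q.roots.toFinset with hS
  have hroot : ∀ s ∈ S, Q.eval s = 0 := fun s hs => by
    rw [hS, Multiset.mem_toFinset] at hs
    exact isRoot_of_mem_roots hs
  have key : ∀ f : ℝ[X], f.natDegree < 2 * n →
      L f = ∑ s ∈ S, L (Lagrange.basis S id s) * f.eval s := by
    intro f hf
    have h1 := modByMonic_add_div f Q
    have hd : (f /ₘ Q).degree < n := by
      apply deg_lt_of_natDeg_lt
      rw [natDegree_divByMonic _ hQ.1, hQ.2.1]; omega
    have h2 : L f = L (f %ₘ Q) := by
      conv_lhs => rw [← h1]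
      rw [map_add, hQ.2.2 _ hd, add_zero]
    have h3 : (f %ₘ Q).degree < S.card := by
      rw [hcard]
      have := degree_modByMonic_lt f hQ.1
      rwa [degree_eq_natDegree hQ.1.ne_zero, hQ.2.1] at this
    have h4 := Lagrange.eq_interpolate_of_eval_eq (s := S) (v := id) (fun s => f.eval s)
      (f := f %ₘ Q) (Set.injOn_id _) h3 (by
        intro s hs
        conv_rhs => rw [← h1]
        simp [hroot s hs])
    rw [h2, h4, Lagrange.interpolate_apply, map_sum]
    refine Finset.sum_congr rfl fun s _ => ?_
    rw [← smul_eq_C_mul, map_smul, smul_eq_mul, mul_comm]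
  refine ⟨fun s => L (Lagrange.basis S id s), fun s hs => ?_, key⟩
  have hn : 0 < n := by rw [← hcard]; exact Finset.card_pos.2 ⟨s, hs⟩
  have hb1 : (Lagrange.basis S id s).eval s = 1 :=
    Lagrange.eval_basis_self (v := id) (Set.injOn_id _) hs
  have hbd : (Lagrange.basis S id s).natDegree = n - 1 := by
    apply natDegree_eq_of_degree_eq_some
    rw [Lagrange.degree_basis (Set.injOn_id _) hs, hcard]
  have hb0 : Lagrange.basis S id s ≠ 0 := fun h => by simp [h] at hb1
  have h1 := key (Lagrange.basis S id s * Lagrange.basis S id s) (by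
    rw [natDegree_mul hb0 hb0, hbd]; omega)
  rw [Finset.sum_eq_single s] at h1
  · have h2 := hL (Lagrange.basis S id s * Lagrange.basis S id s) (mul_ne_zero hb0 hb0)
      (fun y _ => by rw [eval_mul]; exact mul_self_nonneg _)
    rw [h1] at h2
    simpa [hb1] using h2
  · intro u hu hus
    have : (Lagrange.basis S id s).eval u = 0 :=
      Lagrange.eval_basis_of_ne (v := id) (Ne.symm hus) hu
    simp [this]
  · intro h; exact absurd hs h

/-- Sign of the functional from the signs at the nodes. -/
lemma FOrth.nonneg {L : ℝ[X] →ₗ[ℝ] ℝ} (hL : FPos L) {n : ℕ} {Q : ℝ[X]}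
    (hQ : FOrth L n Q) {f : ℝ[X]} (hf : f.natDegree < 2 * n)
    (h : ∀ s, Q.IsRoot s → 0 ≤ f.eval s) : 0 ≤ L f := by
  obtain ⟨W, hW, hG⟩ := hQ.gauss hL
  rw [hG f hf]
  refine Finset.sum_nonneg fun s hs => mul_nonneg (hW s hs).le (h s ?_)
  exact isRoot_of_mem_roots (Multiset.mem_toFinset.1 hs)

lemma FOrth.eq_zero {L : ℝ[X] →ₗ[ℝ] ℝ} (hL : FPos L) {n : ℕ} {Q : ℝ[X]}
    (hQ : FOrth L n Q) {f : ℝ[X]} (hf : f.natDegree < 2 * n)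
    (h : ∀ s, Q.IsRoot s → 0 ≤ f.eval s) (h0 : L f ≤ 0) : ∀ s, Q.IsRoot s → f.eval s = 0 := by
  obtain ⟨W, hW, hG⟩ := hQ.gauss hL
  rw [hG f hf] at h0
  have hnn : ∀ s ∈ Q.roots.toFinset, 0 ≤ W s * f.eval s := fun s hs =>
    mul_nonneg (hW s hs).le (h s (isRoot_of_mem_roots (Multiset.mem_toFinset.1 hs)))
  have hz := (Finset.sum_eq_zero_iff_of_nonneg hnn).1 (le_antisymm h0 (Finset.sum_nonneg hnn))
  intro s hs
  have hsm : s ∈ Q.roots.toFinset := Multiset.mem_toFinset.2 ((mem_roots hQ.1.ne_zero).2 hs)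
  exact (mul_eq_zero.1 (hz s hsm)).resolve_left (hW s hsm).ne'

/-- The number of roots above a given point. -/
noncomputable def nAbove (Q : ℝ[X]) (x : ℝ) : ℕ := (Q.roots.toFinset.filter (fun y => x < y)).card

/-- The number of roots below a given point. -/
noncomputable def nBelow (Q : ℝ[X]) (x : ℝ) : ℕ := (Q.roots.toFinset.filter (fun y => y < x)).card

lemma FOrth.below {L : ℝ[X] →ₗ[ℝ] ℝ} (hL : FPos L) {n : ℕ} {Q : ℝ[X]}
    (hQ : FOrth L n Q) {x : ℝ} (hx : Q.IsRoot x) : nBelow Q x + nAbove Q x + 1 = n := by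
  rw [← hQ.card_roots hL]
  have hxm : x ∈ Q.roots.toFinset := Multiset.mem_toFinset.2 ((mem_roots hQ.1.ne_zero).2 hx)
  rw [← Finset.card_erase_add_one hxm, nBelow, nAbove, ← Finset.card_union_of_disjoint]
  · congr 2
    ext y
    simp only [Finset.mem_union, Finset.mem_filter, Finset.mem_erase]
    constructor
    · rintro (⟨h1, h2⟩ | ⟨h1, h2⟩)
      exacts [⟨h2.ne, h1⟩, ⟨h2.ne', h1⟩]
    · rintro ⟨h1, h2⟩
      rcases lt_or_gt_of_ne h1 with h | h
      exacts [Or.inl ⟨h2, h⟩, Or.inr ⟨h2, h⟩]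
  · rw [Finset.disjoint_left]
    intro y h1 h2
    simp only [Finset.mem_filter] at h1 h2
    exact lt_asymm h1.2 h2.2

/-- The test polynomial vanishing at the zeros of `Q` below `x` and the zeros of `R` above `Y`. -/
noncomputable def testPoly (Q R : ℝ[X]) (x Y : ℝ) : ℝ[X] :=
  (∏ s ∈ Q.roots.toFinset.filter (fun y => y < x), (X - C s)) *
  (∏ s ∈ R.roots.toFinset.filter (fun y => Y < y), (X - C s))

lemma testPoly_monic (Q R : ℝ[X]) (x Y : ℝ) : (testPoly Q R x Y).Monic :=
  (monic_prod_X_sub_C _ _).mul (monic_prod_X_sub_C _ _)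

lemma testPoly_natDegree (Q R : ℝ[X]) (x Y : ℝ) :
    (testPoly Q R x Y).natDegree = nBelow Q x + nAbove R Y := by
  rw [testPoly, (monic_prod_X_sub_C _ _).natDegree_mul (monic_prod_X_sub_C _ _),
    natDegree_finsetProd_X_sub_C_eq_card, natDegree_finsetProd_X_sub_C_eq_card]
  rfl

lemma testPoly_below {Q R : ℝ[X]} (hQ : Q ≠ 0) {x Y s : ℝ} (hs : Q.IsRoot s) (h : s < x) :
    (testPoly Q R x Y).eval s = 0 := by
  rw [testPoly, eval_mul, eval_prod, Finset.prod_eq_zero (i := s)]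
  · simp
  · simp [hQ, h]; exact hs
  · simp

lemma testPoly_above {Q R : ℝ[X]} (hR : R ≠ 0) {x Y s : ℝ} (hs : R.IsRoot s) (h : Y < s) :
    (testPoly Q R x Y).eval s = 0 := by
  rw [testPoly, eval_mul, eval_prod _ _ s, mul_comm, eval_prod, Finset.prod_eq_zero (i := s)]
  · simp
  · simp [hR, h]; exact hs
  · simp

/-- A nonzero polynomial of degree `< n - 1` cannot vanish at all roots of `Q` but one. -/
lemma FOrth.not_vanish {L : ℝ[X] →ₗ[ℝ] ℝ} (hL : FPos L) {n : ℕ} {Q : ℝ[X]}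
    (hQ : FOrth L n Q) {r : ℝ[X]} (hr : r ≠ 0) (hd : r.natDegree + 1 < n) (x : ℝ)
    (h : ∀ s, Q.IsRoot s → s ≠ x → r.eval s = 0) : False := by
  have hsub : Q.roots.toFinset.erase x ⊆ r.roots.toFinset := by
    intro s hs
    rw [Finset.mem_erase, Multiset.mem_toFinset] at hs
    rw [Multiset.mem_toFinset, mem_roots hr]
    exact h s (isRoot_of_mem_roots hs.2) hs.1
  have h1 := Finset.card_le_card hsub
  have h2 := Finset.pred_card_le_card_erase (a := x) (s := Q.roots.toFinset)
  rw [hQ.card_roots hL] at h2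
  have h3 := (Multiset.toFinset_card_le r.roots).trans (card_roots' r)
  omega

/-- Markov monotonicity. -/
lemma core_markov {L L' : ℝ[X] →ₗ[ℝ] ℝ} (hL : FPos L) (hL' : FPos L') {n : ℕ} {Q R : ℝ[X]}
    (hQ : FOrth L n Q) (hR : FOrth L' n R)
    (hD : ∀ c : ℝ, 0 < c → ∃ K : ℝ, 0 < K ∧ ∀ r : ℝ[X], r ≠ 0 →
      K * L ((X - C c) * r ^ 2) < L' ((X - C c) * r ^ 2))
    {x Y : ℝ} (hx : Q.IsRoot x) (_hY : R.IsRoot Y) (hc : nAbove Q x = nAbove R Y) : x < Y := by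
  by_contra hcon
  push Not at hcon
  have hb := hQ.below hL hx
  set r := testPoly Q R x Y with hr
  have hrm : r.Monic := testPoly_monic Q R x Y
  have hrd : r.natDegree = nBelow Q x + nAbove R Y := testPoly_natDegree Q R x Y
  have hdeg : ((X - C x) * r ^ 2).natDegree < 2 * n := by
    rw [(monic_X_sub_C x).natDegree_mul (hrm.pow 2), hrm.natDegree_pow, natDegree_X_sub_C]; omega
  obtain ⟨K, hK, hD⟩ := hD x (hQ.pos_root hL hx)
  have h1 := hD r hrm.ne_zero
  have h2 : 0 ≤ L ((X - C x) * r ^ 2) := by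
    refine hQ.nonneg hL hdeg fun s hs => ?_
    rcases lt_or_ge s x with h | h
    · simp [hr, testPoly_below hQ.1.ne_zero hs h]
    · simp; exact mul_nonneg (by linarith) (by positivity)
  have h3 : 0 ≤ L' (-((X - C x) * r ^ 2)) := by
    refine hR.nonneg hL' (by rwa [natDegree_neg]) fun s hs => ?_
    rcases lt_or_ge Y s with h | h
    · simp [hr, testPoly_above hR.1.ne_zero hs h]
    · simp; exact mul_nonpos_of_nonpos_of_nonneg (by linarith) (by positivity)
  rw [map_neg] at h3
  have := mul_nonneg hK.le h2
  linarith

/-- Lower interlacing: `L' f = L (X f)`; zeros of degree `n` for `L` and `n - 1` for `L'`. -/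
lemma core_a {L L' : ℝ[X] →ₗ[ℝ] ℝ} (hL : FPos L) (hL' : FPos L') {n : ℕ} {Q R : ℝ[X]}
    (hQ : FOrth L (n + 1) Q) (hR : FOrth L' n R) (hLL : ∀ f, L' f = L (X * f))
    {x Y : ℝ} (hx : Q.IsRoot x) (_hY : R.IsRoot Y) (hc : nAbove Q x = nAbove R Y + 1) : x < Y := by
  by_contra hcon
  push Not at hcon
  have hb := hQ.below hL hx
  set r := testPoly Q R x Y with hr
  have hrm : r.Monic := testPoly_monic Q R x Y
  have hrd : r.natDegree = nBelow Q x + nAbove R Y := testPoly_natDegree Q R x Y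
  have hd1 : ((X - C x) * r ^ 2).natDegree = 1 + 2 * r.natDegree := by
    rw [(monic_X_sub_C x).natDegree_mul (hrm.pow 2), hrm.natDegree_pow, natDegree_X_sub_C]
  have hd2 : (X * ((X - C x) * r ^ 2)).natDegree = 1 + (1 + 2 * r.natDegree) := by
    rw [monic_X.natDegree_mul ((monic_X_sub_C x).mul (hrm.pow 2)), hd1, natDegree_X]
  have h3 : 0 ≤ L' (-((X - C x) * r ^ 2)) := by
    refine hR.nonneg hL' (by rw [natDegree_neg]; omega) fun s hs => ?_
    rcases lt_or_ge Y s with h | h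
    · simp [hr, testPoly_above hR.1.ne_zero hs h]
    · simp; exact mul_nonpos_of_nonpos_of_nonneg (by linarith) (by positivity)
  rw [map_neg, hLL] at h3
  have h2 := hQ.eq_zero hL (f := X * ((X - C x) * r ^ 2)) (by omega) (fun s hs => by
    have := hQ.pos_root hL hs
    rcases lt_or_ge s x with h | h
    · simp [hr, testPoly_below hQ.1.ne_zero hs h]
    · simp; exact mul_nonneg this.le (mul_nonneg (by linarith) (by positivity))) (by linarith)
  refine hQ.not_vanish hL hrm.ne_zero (by omega) x fun s hs hsx => ?_
  have h4 := h2 s hs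
  have := (hQ.pos_root hL hs).ne'
  have := sub_ne_zero.mpr hsx
  simp_all

/-- Interlacing across a shift by two. -/
lemma core_c {L L' : ℝ[X] →ₗ[ℝ] ℝ} (hL : FPos L) (hL' : FPos L') {n : ℕ} {Q R : ℝ[X]}
    (hQ : FOrth L' n Q) (hR : FOrth L (n + 1) R) (hLL : ∀ f, L' f = L (X * (X * f)))
    {x Y : ℝ} (hx : Q.IsRoot x) (_hY : R.IsRoot Y) (hc : nAbove Q x = nAbove R Y) : x < Y := by
  by_contra hcon
  push Not at hcon
  have hb := hQ.below hL' hx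
  set r := testPoly Q R x Y with hr
  have hrm : r.Monic := testPoly_monic Q R x Y
  have hrd : r.natDegree = nBelow Q x + nAbove R Y := testPoly_natDegree Q R x Y
  have hd1 : ((X - C x) * r ^ 2).natDegree = 1 + 2 * r.natDegree := by
    rw [(monic_X_sub_C x).natDegree_mul (hrm.pow 2), hrm.natDegree_pow, natDegree_X_sub_C]
  have hmm := (monic_X_sub_C x).mul (hrm.pow 2)
  have hd2 : (X * (X * ((X - C x) * r ^ 2))).natDegree = 1 + (1 + (1 + 2 * r.natDegree)) := by
    rw [monic_X.natDegree_mul (monic_X.mul hmm), monic_X.natDegree_mul hmm, hd1, natDegree_X]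
  have h3 : 0 ≤ L' ((X - C x) * r ^ 2) := by
    refine hQ.nonneg hL' (by omega) fun s hs => ?_
    rcases lt_or_ge s x with h | h
    · simp [hr, testPoly_below hQ.1.ne_zero hs h]
    · simp; exact mul_nonneg (by linarith) (by positivity)
  rw [hLL] at h3
  have h2 := hR.eq_zero hL (f := -(X * (X * ((X - C x) * r ^ 2)))) (by rw [natDegree_neg]; omega)
    (fun s hs => by
    have := hR.pos_root hL hs
    rcases lt_or_ge Y s with h | h
    · simp [hr, testPoly_above hR.1.ne_zero hs h]
    · simp
      exact mul_nonpos_of_nonneg_of_nonpos this.le (mul_nonpos_of_nonneg_of_nonpos this.le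
        (mul_nonpos_of_nonpos_of_nonneg (by linarith) (by positivity))))
    (by rw [map_neg]; linarith)
  refine hR.not_vanish hL hrm.ne_zero (by omega) Y fun s hs hsx => ?_
  rcases lt_or_gt_of_ne hsx with h | h
  · have h4 := h2 s hs
    have := (hR.pos_root hL hs).ne'
    have := sub_ne_zero.mpr (h.trans_le hcon).ne
    simp_all
  · exact testPoly_above hR.1.ne_zero hs h

/-- Interlacing between the same degree for `L' f = L (X f)` and `L`. -/
lemma core_d {L L' : ℝ[X] →ₗ[ℝ] ℝ} (hL : FPos L) (hL' : FPos L') {n : ℕ} {Q R : ℝ[X]}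
    (hQ : FOrth L' n Q) (hR : FOrth L n R) (hLL : ∀ f, L' f = L (X * f))
    {x Y : ℝ} (hx : Q.IsRoot x) (_hY : R.IsRoot Y) (hc : nAbove Q x = nAbove R Y + 1) : x < Y := by
  by_contra hcon
  push Not at hcon
  have hb := hQ.below hL' hx
  set r := testPoly Q R x Y with hr
  have hrm : r.Monic := testPoly_monic Q R x Y
  have hrd : r.natDegree = nBelow Q x + nAbove R Y := testPoly_natDegree Q R x Y
  have hd1 : ((X - C x) * r ^ 2).natDegree = 1 + 2 * r.natDegree := by
    rw [(monic_X_sub_C x).natDegree_mul (hrm.pow 2), hrm.natDegree_pow, natDegree_X_sub_C]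
  have hmm := (monic_X_sub_C x).mul (hrm.pow 2)
  have hd2 : (X * ((X - C x) * r ^ 2)).natDegree = 1 + (1 + 2 * r.natDegree) := by
    rw [monic_X.natDegree_mul hmm, hd1, natDegree_X]
  have h3 : 0 ≤ L' ((X - C x) * r ^ 2) := by
    refine hQ.nonneg hL' (by omega) fun s hs => ?_
    rcases lt_or_ge s x with h | h
    · simp [hr, testPoly_below hQ.1.ne_zero hs h]
    · simp; exact mul_nonneg (by linarith) (by positivity)
  rw [hLL] at h3
  have h2 := hR.eq_zero hL (f := -(X * ((X - C x) * r ^ 2))) (by rw [natDegree_neg]; omega)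
    (fun s hs => by
    have := hR.pos_root hL hs
    rcases lt_or_ge Y s with h | h
    · simp [hr, testPoly_above hR.1.ne_zero hs h]
    · simp
      exact mul_nonpos_of_nonneg_of_nonpos this.le
        (mul_nonpos_of_nonpos_of_nonneg (by linarith) (by positivity)))
    (by rw [map_neg]; linarith)
  refine hR.not_vanish hL hrm.ne_zero (by omega) Y fun s hs hsx => ?_
  rcases lt_or_gt_of_ne hsx with h | h
  · have h4 := h2 s hs
    have := (hR.pos_root hL hs).ne'
    have := sub_ne_zero.mpr (h.trans_le hcon).ne
    simp_all
  · exact testPoly_above hR.1.ne_zero hs h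

lemma freudWeight_nonneg (m : ℕ) (lam t x : ℝ) : 0 ≤ freudWeight m lam t x := by
  unfold freudWeight; positivity

lemma freudWeight_pos (m : ℕ) (lam t : ℝ) {x : ℝ} (hx : x ≠ 0) : 0 < freudWeight m lam t x := by
  have := abs_pos.mpr hx
  unfold freudWeight; positivity

lemma freudWeight_neg (m : ℕ) (lam t x : ℝ) : freudWeight m lam t (-x) = freudWeight m lam t x := by
  unfold freudWeight
  rw [abs_neg, neg_sq, pow_mul, neg_sq, ← pow_mul]

lemma freudWeight_add (m : ℕ) (lam t k : ℝ) {x : ℝ} (hx : x ≠ 0) :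
    freudWeight m (lam + k) t x = (x ^ 2) ^ k * freudWeight m lam t x := by
  unfold freudWeight
  have h0 := abs_pos.mpr hx
  have : 2 * (lam + k) + 1 = 2 * k + (2 * lam + 1) := by ring
  rw [this, Real.rpow_add h0, Real.rpow_mul h0.le, Real.rpow_two, sq_abs]
  ring

lemma freudWeight_succ (m : ℕ) (lam t : ℝ) {x : ℝ} (hx : x ≠ 0) :
    freudWeight m (lam + 1) t x = x ^ 2 * freudWeight m lam t x := by
  rw [freudWeight_add m lam t 1 hx, Real.rpow_one]

lemma freudWeight_meas (m : ℕ) (lam t : ℝ) : Measurable (freudWeight m lam t) := by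
  unfold freudWeight
  fun_prop

lemma expo_bound (m : ℕ) (hm : 2 ≤ m) (t x : ℝ) :
    t * x ^ 2 - x ^ (2 * m) ≤ ((t + 1) ^ 2 + 1) - x ^ 2 := by
  rw [pow_mul]
  set s := x ^ 2
  have hs : 0 ≤ s := sq_nonneg x
  have h : s ^ 2 - 1 ≤ s ^ m := by
    rcases le_total 1 s with h | h
    · have := pow_le_pow_right₀ h hm; linarith
    · have h1 : s ^ 2 ≤ 1 := pow_le_one₀ hs h
      have := pow_nonneg hs m; linarith
  nlinarith [sq_nonneg (t + 1 - s), sq_nonneg (t + 1), sq_nonneg (s - (t+1)/2)]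

lemma weight_integrable (m : ℕ) (hm : 2 ≤ m) (t a : ℝ) (ha : -1 < a) :
    Integrable (fun x : ℝ => |x| ^ a * Real.exp (t * x ^ 2 - x ^ (2 * m))) := by
  have h1 : Integrable (fun x : ℝ => Real.exp ((t + 1) ^ 2 + 1) *
      (|x| ^ a * Real.exp (-1 * x ^ 2))) := by
    apply Integrable.const_mul
    have h2 := integrableOn_rpow_mul_exp_neg_mul_sq (b := 1) one_pos ha
    have h3 : IntegrableOn (fun x : ℝ => |x| ^ a * Real.exp (-1 * x ^ 2)) (Set.Ioi 0) := by
      refine h2.congr_fun (fun x hx => ?_) measurableSet_Ioi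
      simp only [abs_of_pos (Set.mem_Ioi.1 hx)]
    rw [← integrableOn_univ, ← @Set.Iio_union_Ici _ _ (0 : ℝ), integrableOn_union,
      integrableOn_Ici_iff_integrableOn_Ioi]
    refine ⟨?_, h3⟩
    rw [← (Measure.measurePreserving_neg (volume : Measure ℝ)).integrableOn_comp_preimage
      (Homeomorph.neg ℝ).measurableEmbedding]
    simpa [Function.comp_def] using h3
  refine h1.mono' ?_ (Filter.Eventually.of_forall fun x => ?_)
  · apply Measurable.aestronglyMeasurable; fun_prop
  · rw [Real.norm_of_nonneg (by positivity), mul_left_comm, ← Real.exp_add]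
    gcongr
    have := expo_bound m hm t x
    linarith

lemma mono_integrable (m : ℕ) (hm : 2 ≤ m) (t lam : ℝ) (hlam : -1 < lam) (j : ℕ) :
    Integrable (fun x : ℝ => x ^ j * freudWeight m lam t x) := by
  have h := weight_integrable m hm t ((2 * lam + 1) + j) (by
    have : (0:ℝ) ≤ j := Nat.cast_nonneg j
    linarith)
  have hae : ∀ᵐ x : ℝ, x ≠ 0 := by
    simp [ae_iff]
  refine h.mono' ?_ ?_
  · apply Measurable.aestronglyMeasurable
    exact (measurable_id.pow_const j).mul (freudWeight_meas m lam t)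
  · filter_upwards [hae] with x hx
    rw [norm_mul, Real.norm_of_nonneg (freudWeight_nonneg m lam t x), norm_pow, Real.norm_eq_abs,
      freudWeight, Real.rpow_add (abs_pos.mpr hx) (2 * lam + 1) j, Real.rpow_natCast]
    apply le_of_eq; ring

lemma poly_integrable (m : ℕ) (hm : 2 ≤ m) (t lam : ℝ) (hlam : -1 < lam) (f : ℝ[X]) :
    Integrable (fun x : ℝ => f.eval x * freudWeight m lam t x) := by
  induction f using Polynomial.induction_on' with
  | add p q hp hq =>
    simp only [eval_add, add_mul]
    exact hp.add hq
  | monomial n a =>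
    simp only [eval_monomial, mul_assoc]
    exact (mono_integrable m hm t lam hlam n).const_mul a

/-- The moment functional of the Freud weight. -/
noncomputable def freudM (m : ℕ) (hm : 2 ≤ m) (t lam : ℝ) (hlam : -1 < lam) : ℝ[X] →ₗ[ℝ] ℝ where
  toFun f := ∫ x : ℝ, f.eval x * freudWeight m lam t x
  map_add' f g := by
    simp only [eval_add, add_mul]
    exact integral_add (poly_integrable m hm t lam hlam f) (poly_integrable m hm t lam hlam g)
  map_smul' c f := by
    simp only [eval_smul, smul_eq_mul, mul_assoc, RingHom.id_apply]
    exact integral_const_mul c _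

/-- The moment functional in the variable `y = x²`. -/
noncomputable def freudL (m : ℕ) (hm : 2 ≤ m) (t lam : ℝ) (hlam : -1 < lam) : ℝ[X] →ₗ[ℝ] ℝ :=
  (freudM m hm t lam hlam).comp (expand ℝ 2).toLinearMap

lemma freudM_apply (m : ℕ) (hm : 2 ≤ m) (t lam : ℝ) (hlam : -1 < lam) (f : ℝ[X]) :
    freudM m hm t lam hlam f = ∫ x : ℝ, f.eval x * freudWeight m lam t x := rfl

lemma freudL_apply' (m : ℕ) (hm : 2 ≤ m) (t lam : ℝ) (hlam : -1 < lam) (f : ℝ[X]) :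
    freudL m hm t lam hlam f = freudM m hm t lam hlam (expand ℝ 2 f) := rfl

lemma freudL_apply (m : ℕ) (hm : 2 ≤ m) (t lam : ℝ) (hlam : -1 < lam) (f : ℝ[X]) :
    freudL m hm t lam hlam f = ∫ x : ℝ, f.eval (x ^ 2) * freudWeight m lam t x := by
  rw [freudL_apply', freudM_apply]; simp only [expand_eval]

lemma integral_pos_of_finite {g : ℝ → ℝ} (hg : Integrable g) (S : Set ℝ) (hS : S.Finite)
    (hpos : ∀ x ∉ S, 0 < g x) : 0 < ∫ x, g x := by
  have hae : ∀ᵐ x : ℝ, x ∉ S := by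
    rw [ae_iff]; simpa using hS.measure_zero volume
  rw [integral_pos_iff_support_of_nonneg_ae (by
    filter_upwards [hae] with x hx using (hpos x hx).le) hg]
  have h1 : Sᶜ ⊆ Function.support g := fun x hx => (hpos x hx).ne'
  refine lt_of_lt_of_le ?_ (measure_mono h1)
  have : volume (Sᶜ) = ⊤ := by
    rw [measure_compl hS.measurableSet (by simp [hS.measure_zero volume])]
    simp [hS.measure_zero volume]
  rw [this]; simp

lemma expand_ne {f : ℝ[X]} (hf : f ≠ 0) : expand ℝ 2 f ≠ 0 :=
  (expand_eq_zero two_pos).not.mpr hf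

lemma roots_finite {f : ℝ[X]} (hf : f ≠ 0) : {x : ℝ | f.eval x = 0}.Finite := by
  have := f.roots.toFinset.finite_toSet
  refine this.subset fun x hx => ?_
  simp [hf]; exact hx

lemma freudM_pos (m : ℕ) (hm : 2 ≤ m) (t lam : ℝ) (hlam : -1 < lam) (f : ℝ[X]) (hf : f ≠ 0)
    (h : ∀ x, x ≠ 0 → 0 ≤ f.eval x) : 0 < freudM m hm t lam hlam f := by
  rw [freudM_apply]
  refine integral_pos_of_finite (poly_integrable m hm t lam hlam f)
    ({x : ℝ | f.eval x = 0} ∪ {0}) ((roots_finite hf).union (Set.finite_singleton 0)) ?_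
  intro x hx
  simp only [Set.mem_union, Set.mem_ofPred_eq, Set.mem_singleton_iff, not_or] at hx
  exact mul_pos (lt_of_le_of_ne (h x hx.2) (Ne.symm hx.1)) (freudWeight_pos m lam t hx.2)

lemma freudM_sq (m : ℕ) (hm : 2 ≤ m) (t lam : ℝ) (hlam : -1 < lam) (f : ℝ[X]) (hf : f ≠ 0) :
    freudM m hm t lam hlam (f * f) ≠ 0 :=
  (freudM_pos m hm t lam hlam _ (mul_ne_zero hf hf) fun x _ => by
    rw [eval_mul]; exact mul_self_nonneg _).ne'

lemma freudL_pos (m : ℕ) (hm : 2 ≤ m) (t lam : ℝ) (hlam : -1 < lam) :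
    FPos (freudL m hm t lam hlam) := by
  intro f hf h
  rw [freudL_apply']
  refine freudM_pos m hm t lam hlam _ (expand_ne hf) fun x hx => ?_
  rw [expand_eval]
  exact h _ (by positivity)

lemma freudM_succ (m : ℕ) (hm : 2 ≤ m) (t lam : ℝ) (hlam : -1 < lam) (hlam' : -1 < lam + 1)
    (f : ℝ[X]) :
    freudM m hm t (lam + 1) hlam' f = freudM m hm t lam hlam (X ^ 2 * f) := by
  rw [freudM_apply, freudM_apply]
  have hae : ∀ᵐ x : ℝ, x ≠ 0 := by simp [ae_iff]
  refine integral_congr_ae ?_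
  filter_upwards [hae] with x hx
  rw [freudWeight_succ m lam t hx]
  simp only [eval_mul, eval_pow, eval_X]
  ring

lemma freudL_succ (m : ℕ) (hm : 2 ≤ m) (t lam : ℝ) (hlam : -1 < lam) (hlam' : -1 < lam + 1)
    (f : ℝ[X]) :
    freudL m hm t (lam + 1) hlam' f = freudL m hm t lam hlam (X * f) := by
  rw [freudL_apply', freudL_apply', freudM_succ m hm t lam hlam hlam', map_mul (expand ℝ 2), expand_X]

lemma freudL_markov (m : ℕ) (hm : 2 ≤ m) (t lam k : ℝ) (hk : 0 < k) (hlam : -1 < lam)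
    (hlam' : -1 < lam + k) (c : ℝ) (hc : 0 < c) : ∃ K : ℝ, 0 < K ∧ ∀ r : ℝ[X], r ≠ 0 →
      K * freudL m hm t lam hlam ((X - C c) * r ^ 2) <
        freudL m hm t (lam + k) hlam' ((X - C c) * r ^ 2) := by
  refine ⟨c ^ k, Real.rpow_pos_of_pos hc k, fun r hr => ?_⟩
  have hI1 := poly_integrable m hm t lam hlam (expand ℝ 2 ((X - C c) * r ^ 2))
  have hI2 := poly_integrable m hm t (lam + k) hlam' (expand ℝ 2 ((X - C c) * r ^ 2))
  have hI3 := hI2.sub (hI1.const_mul (c ^ k))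
  rw [freudL_apply', freudL_apply', freudM_apply, freudM_apply, ← integral_const_mul, ← sub_pos,
    ← integral_sub hI2 (hI1.const_mul (c ^ k))]
  have hne : (X - C c) * r ^ 2 ≠ 0 := mul_ne_zero (X_sub_C_ne_zero c) (pow_ne_zero 2 hr)
  refine integral_pos_of_finite hI3
    ({x : ℝ | (expand ℝ 2 ((X - C c) * r ^ 2)).eval x = 0} ∪ {0})
    ((roots_finite (expand_ne hne)).union (Set.finite_singleton 0)) ?_
  intro x hx
  simp only [Set.mem_union, Set.mem_ofPred_eq, Set.mem_singleton_iff, not_or] at hx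
  obtain ⟨h1, h2⟩ := hx
  simp only [expand_eval, eval_mul, eval_sub, eval_X, eval_C, eval_pow] at h1 ⊢
  rw [freudWeight_add m lam t k h2]
  have hw := freudWeight_pos m lam t h2
  have hx2 : 0 < x ^ 2 := by positivity
  have hr2 : 0 < (r.eval (x ^ 2)) ^ 2 :=
    lt_of_le_of_ne (sq_nonneg _) (Ne.symm (right_ne_zero_of_mul h1))
  have key : 0 < (x ^ 2 - c) * ((x ^ 2) ^ k - c ^ k) := by
    rcases lt_or_gt_of_ne (sub_ne_zero.mp (left_ne_zero_of_mul h1)) with h | h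
    · have := Real.rpow_lt_rpow hx2.le h hk
      exact mul_pos_of_neg_of_neg (by linarith) (by linarith)
    · have := Real.rpow_lt_rpow hc.le h hk
      exact mul_pos (by linarith) (by linarith)
  have := mul_pos (mul_pos key hr2) hw
  nlinarith [this]

lemma freudM_comp_neg (m : ℕ) (hm : 2 ≤ m) (t lam : ℝ) (hlam : -1 < lam) (f : ℝ[X]) :
    freudM m hm t lam hlam (f.comp (-X)) = freudM m hm t lam hlam f := by
  rw [freudM_apply, freudM_apply, ← integral_neg_eq_self (fun x => f.eval x * freudWeight m lam t x)]
  simp [freudWeight_neg]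

/-- Pairwise orthogonality gives orthogonality to all lower degree polynomials. -/
lemma freud_orth (m : ℕ) (hm : 2 ≤ m) (t lam : ℝ) (hlam : -1 < lam) (p : ℕ → ℝ[X])
    (h1 : ∀ n, (p n).Monic) (h2 : ∀ n, (p n).natDegree = n)
    (h3 : ∀ j k, j ≠ k → ∫ x : ℝ, (p j).eval x * (p k).eval x * freudWeight m lam t x = 0)
    (n : ℕ) : FOrth (freudM m hm t lam hlam) n (p n) := by
  refine ⟨h1 n, h2 n, ?_⟩
  have key : ∀ d ≤ n, ∀ g : ℝ[X], g.degree < d → freudM m hm t lam hlam (p n * g) = 0 := by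
    intro d
    induction d with
    | zero =>
      intro _ g hg
      have : g = 0 := by
        rw [← degree_eq_bot]
        simpa [Nat.WithBot.lt_zero_iff] using hg
      simp [this]
    | succ d ih =>
      intro hd g hg
      have hdec : (g - C (g.coeff d) * p d).degree < d := by
        rw [degree_lt_iff_coeff_zero] at hg ⊢
        intro j hj
        rw [coeff_sub, coeff_C_mul]
        rcases hj.eq_or_lt with rfl | hj
        · have : (p d).coeff d = 1 := by
            have := (h1 d).coeff_natDegree
            rwa [h2] at this
          rw [this]; ring
        · rw [hg j hj, coeff_eq_zero_of_natDegree_lt (p := p d) (by rw [h2]; exact hj)]; ring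
      have e : p n * g = p n * (g - C (g.coeff d) * p d) + g.coeff d • (p n * p d) := by
        rw [smul_eq_C_mul]; ring
      rw [e, map_add, map_smul, ih (by omega) _ hdec, freudM_apply]
      have := h3 n d (by omega)
      simp only [eval_mul]
      rw [this]; simp
  exact key n le_rfl

lemma freud_parity (m : ℕ) (hm : 2 ≤ m) (t lam : ℝ) (hlam : -1 < lam) {n : ℕ} {p : ℝ[X]}
    (hp : FOrth (freudM m hm t lam hlam) n p) : p = (-1) ^ n * p.comp (-X) := by
  refine FOrth.unique (freudM_sq m hm t lam hlam) hp ⟨?_, ?_, ?_⟩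
  · have := hp.1.neg_one_pow_natDegree_mul_comp_neg_X
    rwa [hp.2.1] at this
  · have e : ((-1 : ℝ[X]) ^ n) = C ((-1) ^ n) := by simp
    rw [e, natDegree_C_mul (pow_ne_zero n (by norm_num)), natDegree_comp]
    simp [hp.2.1]
  · intro g hg
    have hg' : (g.comp (-X)).degree < n := by
      by_cases h0 : g = 0
      · simp [h0]
      apply deg_lt_of_natDeg_lt
      rw [natDegree_comp, natDegree_neg, natDegree_X, mul_one]
      exact (natDegree_lt_iff_degree_lt h0).2 hg
    have e : ((-1 : ℝ[X]) ^ n) * p.comp (-X) * g = ((-1 : ℝ) ^ n) • (p * g.comp (-X)).comp (-X) := by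
      rw [smul_eq_C_mul, mul_comp, comp_neg_X_comp_neg_X]
      simp [mul_assoc]
    rw [e, map_smul, freudM_comp_neg, hp.2.2 _ hg', smul_zero]

lemma freud_even (m : ℕ) (hm : 2 ≤ m) (t lam : ℝ) (hlam : -1 < lam) {n : ℕ} {p : ℝ[X]}
    (hp : FOrth (freudM m hm t lam hlam) (2 * n) p) :
    ∃ Q, p = expand ℝ 2 Q ∧ FOrth (freudL m hm t lam hlam) n Q := by
  have h := freud_parity m hm t lam hlam hp
  rw [pow_mul, neg_one_sq, one_pow, one_mul] at h
  have hodd : ∀ j, ¬ 2 ∣ j → p.coeff j = 0 := by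
    intro j hj
    have h1 : (p.comp (-X)).coeff j = (-1) ^ j * p.coeff j := by
      have : (-X : ℝ[X]) = C (-1) * X := by simp
      rw [this, comp_C_mul_X_coeff]; ring
    rw [← h, Odd.neg_one_pow (Nat.not_even_iff_odd.1 (by rwa [even_iff_two_dvd]))] at h1
    linarith
  have hexp : p = expand ℝ 2 (contract 2 p) := by
    ext j
    rw [coeff_expand two_pos]
    split_ifs with hj
    · rw [coeff_contract two_ne_zero, Nat.div_mul_cancel hj]
    · exact hodd j hj
  refine ⟨contract 2 p, hexp, ?_, ?_, ?_⟩
  · have := hp.1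
    rw [hexp, monic_expand_iff two_pos] at this
    exact this
  · have := hp.2.1
    rw [hexp, natDegree_expand] at this
    omega
  · intro g hg
    rw [freudL_apply', map_mul, ← hexp]
    apply hp.2.2
    by_cases h0 : g = 0
    · simp only [h0, map_zero, mul_zero, degree_zero]; exact WithBot.bot_lt_coe _
    apply deg_lt_of_natDeg_lt
    rw [natDegree_expand]
    have := (natDegree_lt_iff_degree_lt h0).2 hg
    omega

lemma freud_odd (m : ℕ) (hm : 2 ≤ m) (t lam : ℝ) (hlam : -1 < lam) (hlam' : -1 < lam + 1)
    {n : ℕ} {p q : ℝ[X]}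
    (hp : FOrth (freudM m hm t lam hlam) (2 * n + 1) p)
    (hq : FOrth (freudM m hm t (lam + 1) hlam') (2 * n) q) : p = X * q := by
  have h := freud_parity m hm t lam hlam hp
  have h0 : p.coeff 0 = 0 := by
    have := congrArg (eval 0) h
    rw [Odd.neg_one_pow ⟨n, rfl⟩] at this
    simp at this
    rw [coeff_zero_eq_eval_zero]; linarith
  obtain ⟨R, hR⟩ := X_dvd_iff.2 h0
  have hRm : R.Monic := monic_X.of_mul_monic_left (hR ▸ hp.1)
  have hRd : R.natDegree = 2 * n := by
    have := monic_X.natDegree_mul hRm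
    rw [← hR, hp.2.1, natDegree_X] at this
    omega
  have hRo : FOrth (freudM m hm t (lam + 1) hlam') (2 * n) R := by
    refine ⟨hRm, hRd, fun g hg => ?_⟩
    rw [freudM_succ m hm t lam hlam]
    have e : X ^ 2 * (R * g) = p * (X * g) := by rw [hR]; ring
    rw [e]
    apply hp.2.2
    by_cases h0 : g = 0
    · simp only [h0, map_zero, mul_zero, degree_zero]; exact WithBot.bot_lt_coe _
    apply deg_lt_of_natDeg_lt
    rw [natDegree_X_mul h0]
    have := (natDegree_lt_iff_degree_lt h0).2 hg
    omega
  rw [hR, FOrth.unique (freudM_sq m hm t (lam + 1) hlam') hRo hq]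

lemma nth_expand {Q : ℝ[X]} (hQ : Q ≠ 0) {ℓ : ℕ} {z : ℝ}
    (h : IsNthLargestPosZero (expand ℝ 2 Q) ℓ z) :
    0 < z ∧ Q.IsRoot (z ^ 2) ∧ nAbove Q (z ^ 2) = ℓ - 1 := by
  obtain ⟨h1, h2, h3⟩ := h
  refine ⟨h1, ?_, ?_⟩
  · rw [IsRoot, expand_eval] at h2; exact h2
  · rw [← h3, nAbove]
    symm
    refine Finset.card_bij (fun y _ => y ^ 2) ?_ ?_ ?_
    · intro y hy
      simp only [Finset.mem_filter, Multiset.mem_toFinset, mem_roots hQ,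
        mem_roots (expand_ne hQ), IsRoot, expand_eval] at hy ⊢
      exact ⟨hy.1, by nlinarith [hy.2]⟩
    · intro a ha b hb hab
      simp only [Finset.mem_filter] at ha hb
      exact (pow_left_inj₀ (h1.trans ha.2).le (h1.trans hb.2).le two_ne_zero).1 hab
    · intro b hb
      simp only [Finset.mem_filter, Multiset.mem_toFinset, mem_roots hQ, IsRoot] at hb
      have hb0 : 0 ≤ b := (sq_nonneg z).trans hb.2.le
      refine ⟨Real.sqrt b, ?_, Real.sq_sqrt hb0⟩
      simp only [Finset.mem_filter, Multiset.mem_toFinset, 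
        mem_roots (expand_ne hQ), IsRoot, expand_eval, Real.sq_sqrt hb0]
      exact ⟨hb.1, (Real.lt_sqrt h1.le).2 hb.2⟩

lemma nth_X_mul {q : ℝ[X]} (hq : q ≠ 0) {ℓ : ℕ} {z : ℝ}
    (h : IsNthLargestPosZero (X * q) ℓ z) : IsNthLargestPosZero q ℓ z := by
  obtain ⟨h1, h2, h3⟩ := h
  refine ⟨h1, ?_, ?_⟩
  · simpa [h1.ne'] using h2
  · rw [← h3]
    congr 1
    ext y
    simp only [Finset.mem_filter, Multiset.mem_toFinset, mem_roots hq,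
      mem_roots (mul_ne_zero X_ne_zero hq), IsRoot, eval_mul, eval_X, mul_eq_zero]
    constructor
    · rintro ⟨a, b⟩; exact ⟨Or.inr a, b⟩
    · rintro ⟨a, b⟩; exact ⟨a.resolve_left (h1.trans b).ne', b⟩

lemma nth_le {q : ℝ[X]} (hq : q ≠ 0) {ℓ : ℕ} {z w : ℝ}
    (hz : IsNthLargestPosZero q ℓ z) (hw : IsNthLargestPosZero q ℓ w) : z ≤ w := by
  by_contra hcon
  push Not at hcon
  have : (q.roots.toFinset.filter (fun y => z < y)) ⊂ (q.roots.toFinset.filter (fun y => w < y)) := by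
    rw [Finset.ssubset_iff_of_subset]
    · refine ⟨z, ?_, by simp⟩
      simp only [Finset.mem_filter, Multiset.mem_toFinset, mem_roots hq]
      exact ⟨hz.2.1, hcon⟩
    · intro y hy
      simp only [Finset.mem_filter] at hy ⊢
      exact ⟨hy.1, hcon.trans hy.2⟩
  have := Finset.card_lt_card this
  rw [hz.2.2, hw.2.2] at this
  omega

/-- Interlacing of the zeros of generalised higher order Freud polynomials:
writing `x_{ℓ,n}^{λ}` for the `ℓ`-th largest positive zero of `P_n(x;λ)`, for every `n ≥ 2`,
`ℓ ∈ {1,…,n−1}` and `k ∈ (0,1)`,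
(i) `x_{ℓ+1,2n}^{λ} < x_{ℓ,2n−1}^{λ} < x_{ℓ,2n−1}^{λ+k} < x_{ℓ,2n−1}^{λ+1} < x_{ℓ,2n}^{λ}`, and
(ii) `x_{ℓ+1,2n+1}^{λ} < x_{ℓ,2n}^{λ} < x_{ℓ,2n}^{λ+k} < x_{ℓ,2n}^{λ+1} = x_{ℓ,2n+1}^{λ}`. -/
theorem zeros_interlacing (m : ℕ) (hm : 2 ≤ m) (t : ℝ)
    (P : ℝ → ℕ → Polynomial ℝ)
    (hmonic : ∀ lam, -1 < lam → ∀ n, (P lam n).Monic)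
    (hdeg : ∀ lam, -1 < lam → ∀ n, (P lam n).natDegree = n)
    (horth : ∀ lam, -1 < lam → ∀ j k, j ≠ k →
      ∫ x : ℝ, (P lam j).eval x * (P lam k).eval x * freudWeight m lam t x = 0) :
    ∀ lam, -1 < lam → ∀ n : ℕ, 2 ≤ n → ∀ ℓ : ℕ, 1 ≤ ℓ → ℓ ≤ n - 1 →
      ∀ k : ℝ, 0 < k → k < 1 →
      (∀ za zb zc zd ze : ℝ,
        IsNthLargestPosZero (P lam (2 * n)) (ℓ + 1) za →
        IsNthLargestPosZero (P lam (2 * n - 1)) ℓ zb →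
        IsNthLargestPosZero (P (lam + k) (2 * n - 1)) ℓ zc →
        IsNthLargestPosZero (P (lam + 1) (2 * n - 1)) ℓ zd →
        IsNthLargestPosZero (P lam (2 * n)) ℓ ze →
        za < zb ∧ zb < zc ∧ zc < zd ∧ zd < ze) ∧
      (∀ z₁ z₂ z₃ z₄ z₅ : ℝ,
        IsNthLargestPosZero (P lam (2 * n + 1)) (ℓ + 1) z₁ →
        IsNthLargestPosZero (P lam (2 * n)) ℓ z₂ →
        IsNthLargestPosZero (P (lam + k) (2 * n)) ℓ z₃ →
        IsNthLargestPosZero (P (lam + 1) (2 * n)) ℓ z₄ →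
        IsNthLargestPosZero (P lam (2 * n + 1)) ℓ z₅ →
        z₁ < z₂ ∧ z₂ < z₃ ∧ z₃ < z₄ ∧ z₄ = z₅) := by
  intro lam hlam n hn ℓ hℓ1 hℓ2 k hk0 hk1
  have hM : ∀ mu (hmu : -1 < mu) j, FOrth (freudM m hm t mu hmu) j (P mu j) := fun mu hmu j =>
    freud_orth m hm t mu hmu (P mu) (hmonic mu hmu) (hdeg mu hmu) (horth mu hmu) j
  have hE : ∀ mu (hmu : -1 < mu) j, ∃ Q, P mu (2 * j) = expand ℝ 2 Q ∧
      FOrth (freudL m hm t mu hmu) j Q := fun mu hmu j =>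
    freud_even m hm t mu hmu (hM mu hmu (2 * j))
  have hO : ∀ mu, -1 < mu → ∀ j, P mu (2 * j + 1) = X * P (mu + 1) (2 * j) := fun mu hmu j =>
    freud_odd m hm t mu hmu (by linarith) (hM mu hmu _) (hM (mu + 1) (by linarith) _)
  have hne : ∀ mu, -1 < mu → ∀ j, P mu j ≠ 0 := fun mu hmu j => (hmonic mu hmu j).ne_zero
  have hEz : ∀ mu (hmu : -1 < mu) j, ∃ Q, FOrth (freudL m hm t mu hmu) j Q ∧
      ∀ l z, IsNthLargestPosZero (P mu (2 * j)) l z →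
        0 < z ∧ Q.IsRoot (z ^ 2) ∧ nAbove Q (z ^ 2) = l - 1 := by
    intro mu hmu j
    obtain ⟨Q, h1, h2⟩ := hE mu hmu j
    refine ⟨Q, h2, fun l z hz => ?_⟩
    rw [h1] at hz
    exact nth_expand h2.1.ne_zero hz
  have hpos := freudL_pos m hm t
  have sqlt : ∀ a b : ℝ, 0 < b → a ^ 2 < b ^ 2 → a < b := fun a b hb h =>
    lt_of_pow_lt_pow_left₀ 2 hb.le h
  have hl1 : -1 < lam + 1 := by linarith
  have hlk : -1 < lam + k := by linarith
  constructor
  · intro za zb zc zd ze ha hb hc hd he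
    obtain ⟨n, rfl⟩ : ∃ n', n = n' + 1 := ⟨n - 1, by omega⟩
    have e : 2 * (n + 1) - 1 = 2 * n + 1 := by omega
    rw [e, hO _ hlam] at hb
    rw [e, hO _ hlk] at hc
    rw [e, hO _ hl1] at hd
    have hl2 : -1 < lam + 1 + 1 := by linarith
    have hl1k : -1 < lam + 1 + k := by linarith
    have hb := nth_X_mul (hne _ hl1 _) hb
    have hc := nth_X_mul (hne _ (by linarith) _) hc
    have hd := nth_X_mul (hne _ hl2 _) hd
    have e2 : lam + k + 1 = lam + 1 + k := by ring
    rw [e2] at hc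
    obtain ⟨Q, hQ, hQz⟩ := hEz lam hlam (n + 1)
    obtain ⟨Q1, hQ1, hQ1z⟩ := hEz (lam + 1) hl1 n
    obtain ⟨Qk, hQk, hQkz⟩ := hEz (lam + 1 + k) hl1k n
    obtain ⟨Q2, hQ2, hQ2z⟩ := hEz (lam + 1 + 1) hl2 n
    obtain ⟨a1, a2, a3⟩ := hQz _ _ ha
    obtain ⟨b1, b2, b3⟩ := hQ1z _ _ hb
    obtain ⟨c1, c2, c3⟩ := hQkz _ _ hc
    obtain ⟨d1, d2, d3⟩ := hQ2z _ _ hd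
    obtain ⟨e1, e2, e3⟩ := hQz _ _ he
    refine ⟨sqlt _ _ b1 ?_, sqlt _ _ c1 ?_, sqlt _ _ d1 ?_, sqlt _ _ e1 ?_⟩
    · exact core_a (hpos _ _) (hpos _ _) hQ hQ1 (freudL_succ m hm t lam hlam hl1) a2 b2 (by omega)
    · exact core_markov (hpos _ _) (hpos _ _) hQ1 hQk
        (freudL_markov m hm t (lam + 1) k hk0 hl1 hl1k) b2 c2 (by omega)
    · have e3 : lam + 1 + 1 = lam + 1 + k + (1 - k) := by ring
      simp only [e3] at hQ2
      exact core_markov (hpos _ _) (hpos _ _) hQk hQ2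
        (freudL_markov m hm t (lam + 1 + k) (1 - k) (by linarith) hl1k (by linarith)) c2 d2
        (by omega)
    · refine core_c (hpos _ _) (hpos _ _) hQ2 hQ (fun f => ?_) d2 e2 (by omega)
      rw [freudL_succ m hm t (lam + 1) hl1, freudL_succ m hm t lam hlam]
  · intro z₁ z₂ z₃ z₄ z₅ h1 h2 h3 h4 h5
    rw [hO _ hlam] at h1 h5
    have h1 := nth_X_mul (hne _ hl1 _) h1
    have h5 := nth_X_mul (hne _ hl1 _) h5
    obtain ⟨Q, hQ, hQz⟩ := hEz lam hlam n
    obtain ⟨Qk, hQk, hQkz⟩ := hEz (lam + k) hlk n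
    obtain ⟨Q1, hQ1, hQ1z⟩ := hEz (lam + 1) hl1 n
    obtain ⟨a1, a2, a3⟩ := hQ1z _ _ h1
    obtain ⟨b1, b2, b3⟩ := hQz _ _ h2
    obtain ⟨c1, c2, c3⟩ := hQkz _ _ h3
    obtain ⟨d1, d2, d3⟩ := hQ1z _ _ h4
    refine ⟨sqlt _ _ b1 ?_, sqlt _ _ c1 ?_, sqlt _ _ d1 ?_, ?_⟩
    · exact core_d (hpos _ _) (hpos _ _) hQ1 hQ (freudL_succ m hm t lam hlam hl1) a2 b2 (by omega)
    · exact core_markov (hpos _ _) (hpos _ _) hQ hQk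
        (freudL_markov m hm t lam k hk0 hlam hlk) b2 c2 (by omega)
    · have e3 : lam + 1 = lam + k + (1 - k) := by ring
      simp only [e3] at hQ1
      exact core_markov (hpos _ _) (hpos _ _) hQk hQ1
        (freudL_markov m hm t (lam + k) (1 - k) (by linarith) hlk (by linarith)) c2 d2 (by omega)
    · exact le_antisymm (nth_le (hne _ hl1 _) h4 h5) (nth_le (hne _ hl1 _) h5 h4)
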